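/- The equation ψ(1) − L(0,a) = 0, i.e. −γ = L(0,a), has a unique root a₀ in the interval (1/15, ∞) (numerically a₀ ≈ 0.512967071402, and a₀ ∈ (1/2, 3/5)); moreover, for a > 1/15, the inequality ψ(x+1) > L(x,a) holds for all x > 0 if and only if a ∈ (1/15, a₀]. -/

import Mathlib

open Real Filter Set

/-- The digamma function ψ(x) = Γ'(x)/Γ(x), as the derivative of log ∘ Γ. -/
noncomputable def digamma (x : ℝ) : ℝ := deriv (fun y : ℝ => Real.log (Real.Gamma y)) x

/-- L(x,a) = (1/(90a²+2))·ln(x²+x+(3a+1)/3) + (45a²/(90a²+2))·ln(x²+x+(15a−1)/(45a)). -/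
noncomputable def L (x a : ℝ) : ℝ :=
  (1 / (90 * a ^ 2 + 2)) * Real.log (x ^ 2 + x + (3 * a + 1) / 3) +
    (45 * a ^ 2 / (90 * a ^ 2 + 2)) * Real.log (x ^ 2 + x + (15 * a - 1) / (45 * a))

/-!
Put `v = x² + x + 1/3`. Then `L x a` is `½ 𝔼 log (v + X)`, where `X` takes the values `a` and
`-1 / (45 a)` with weights proportional to `1` and `45 a²`, so that `𝔼 X = 0` and
`𝔼 X² = 1/45` for every `a`, and `ψ(x + 1) - L x a → 0` as `x → ∞`. `L` is strictly increasing
in `a`, so the root `a₀` is unique, and letting `x → 0` shows that no larger `a` is admissible.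
It remains to prove the inequality for `a₀`.

* Away from `0`, compare with `b = 8/15`, slightly larger than `a₀`. The derivative of the first
  difference of `ψ(x + 1) - L x b` changes sign at most once, from negative to positive. As this
  difference tends to `0` and is nonpositive at `1/12`, it is nonpositive on `[1/12, ∞)`, and
  telescoping to infinity gives `L x a₀ < L x b ≤ ψ(x + 1)` there.
* On `[0, 1/12]` the function `ψ(x + 1) - L x a₀` vanishes at `0` and is strictly increasing.
  To see this without estimating the derivative of `ψ`, use that `ψ(x + 1) - ½ log v` is
  increasing, its first difference being decreasing, and transport this from `x + 2` by the
  functional equation.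
-/

section Digamma

open scoped Topology

lemma differentiableAt_log_Gamma {x : ℝ} (hx : 0 < x) :
    DifferentiableAt ℝ (fun y => log (Gamma y)) x :=
  (differentiableOn_Gamma_Ioi.differentiableAt (Ioi_mem_nhds hx)).log (Gamma_pos_of_pos hx).ne'

lemma log_Gamma_add_one {x : ℝ} (hx : 0 < x) :
    log (Gamma (x + 1)) = log x + log (Gamma x) := by
  rw [Gamma_add_one hx.ne', log_mul hx.ne' (Gamma_pos_of_pos hx).ne']

lemma ne_neg_natCast_of_re_pos {s : ℂ} (hs : 0 < s.re) (m : ℕ) : s ≠ -m := by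
  rintro rfl
  have : (m : ℝ) < 0 := by simpa only [Complex.neg_re, Complex.natCast_re, neg_pos] using hs
  exact this.not_ge m.cast_nonneg

lemma analyticAt_complexGamma {s : ℂ} (hs : 0 < s.re) : AnalyticAt ℂ Complex.Gamma s := by
  rw [Complex.analyticAt_iff_eventually_differentiableAt]
  filter_upwards [Complex.continuous_re.continuousAt.eventually_const_lt hs] with z hz
  exact Complex.differentiableAt_Gamma z (ne_neg_natCast_of_re_pos hz)

lemma continuousAt_complexDigamma {s : ℂ} (hs : 0 < s.re) : ContinuousAt Complex.digamma s :=
  ((analyticAt_complexGamma hs).deriv.div (analyticAt_complexGamma hs)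
    (Complex.Gamma_ne_zero (ne_neg_natCast_of_re_pos hs))).continuousAt

lemma ofReal_digamma {x : ℝ} (hx : 0 < x) : (digamma x : ℂ) = Complex.digamma x := by
  have hreal : HasDerivAt Real.Gamma (deriv Real.Gamma x) x :=
    (differentiableOn_Gamma_Ioi.differentiableAt (Ioi_mem_nhds hx)).hasDerivAt
  have hderiv : ((deriv Real.Gamma x : ℝ) : ℂ) = deriv Complex.Gamma x := by
    refine hreal.ofReal_comp.unique ?_
    simpa only [Complex.Gamma_ofReal] using
      (analyticAt_complexGamma (s := x) hx).differentiableAt.hasDerivAt.comp_ofReal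
  rw [digamma, (hreal.log (Gamma_pos_of_pos hx).ne').deriv, Complex.digamma_def, logDeriv_apply,
    Complex.ofReal_div, hderiv, Complex.Gamma_ofReal]

lemma digamma_one : digamma 1 = -eulerMascheroniConstant := by
  have h := ofReal_digamma one_pos
  rw [Complex.ofReal_one, Complex.digamma_one] at h
  exact_mod_cast h

lemma digamma_add_one {x : ℝ} (hx : 0 < x) : digamma (x + 1) = digamma x + 1 / x := by
  have h := Complex.digamma_apply_add_one x (ne_neg_natCast_of_re_pos hx)
  rw [← ofReal_digamma hx, ← Complex.ofReal_one, ← Complex.ofReal_add,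
    ← ofReal_digamma (by positivity)] at h
  rw [one_div]
  exact_mod_cast h

lemma digamma_add_three {x : ℝ} (hx : -1 < x) :
    digamma (x + 3) = digamma (x + 1) + 1 / (x + 1) + 1 / (x + 2) := by
  rw [show x + 3 = x + 1 + 1 + 1 by ring, digamma_add_one (by linarith),
    digamma_add_one (by linarith), show x + 1 + 1 = x + 2 by ring]

lemma continuousAt_digamma {x : ℝ} (hx : 0 < x) : ContinuousAt digamma x := by
  have hre : ContinuousAt (fun y : ℝ => (Complex.digamma y).re) x :=
    Complex.continuous_re.continuousAt.comp
      ((continuousAt_complexDigamma (s := x) hx).comp Complex.continuous_ofReal.continuousAt)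
  refine hre.congr ?_
  filter_upwards [eventually_gt_nhds hx] with y hy
  rw [← ofReal_digamma hy, Complex.ofReal_re]

lemma log_le_digamma_add_one {x : ℝ} (hx : 0 < x) : log x ≤ digamma (x + 1) := by
  have hx' : 0 < x + 1 := by positivity
  have h := convexOn_log_Gamma.slope_le_deriv (mem_Ioi.2 hx) (mem_Ioi.2 hx') (lt_add_one x)
    (differentiableAt_log_Gamma hx')
  rwa [slope_def_field, Function.comp_apply, Function.comp_apply, log_Gamma_add_one hx,
    add_sub_cancel_right, add_sub_cancel_left, div_one] at h

lemma digamma_le_log {x : ℝ} (hx : 0 < x) : digamma x ≤ log x := by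
  have h := convexOn_log_Gamma.deriv_le_slope (mem_Ioi.2 hx) (mem_Ioi.2 (by positivity))
    (lt_add_one x) (differentiableAt_log_Gamma hx)
  rwa [slope_def_field, Function.comp_apply, Function.comp_apply, log_Gamma_add_one hx,
    add_sub_cancel_right, add_sub_cancel_left, div_one] at h

lemma tendsto_digamma_add_one_sub_log :
    Tendsto (fun x => digamma (x + 1) - log x) atTop (𝓝 0) := by
  refine tendsto_of_tendsto_of_tendsto_of_le_of_le' tendsto_const_nhds
    (tendsto_log_comp_add_sub_log 1) ?_ ?_ <;>
    filter_upwards [eventually_gt_atTop 0] with x hx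
  · exact sub_nonneg.2 (log_le_digamma_add_one hx)
  · exact sub_le_sub_right (digamma_le_log (by positivity)) _

end Digamma

section FwdDiff

open scoped Topology fwdDiff

variable {f : ℝ → ℝ} {l h c x : ℝ}

lemma le_of_tendsto_of_fwdDiff_nonpos (hh : 0 < h) (hf : Tendsto f atTop (𝓝 l))
    (hΔ : ∀ y, x ≤ y → Δ_[h] f y ≤ 0) : l ≤ f x := by
  have hanti : Antitone fun n : ℕ => f (x + n * h) := by
    refine antitone_nat_of_succ_le fun n => ?_
    have := hΔ (x + n * h) (le_add_of_nonneg_right (by positivity))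
    rw [fwdDiff, sub_nonpos] at this
    simpa only [Nat.cast_add_one, add_one_mul, add_assoc] using this
  have hlim : Tendsto (fun n : ℕ => f (x + n * h)) atTop (𝓝 l) :=
    hf.comp (tendsto_atTop_add_const_left _ _
      (tendsto_natCast_atTop_atTop.atTop_mul_const hh))
  simpa only [Nat.cast_zero, zero_mul, add_zero] using hanti.le_of_tendsto hlim 0

lemma monotoneOn_of_tendsto_of_antitoneOn_fwdDiff (hh : 0 < h) (hf : Tendsto f atTop (𝓝 l))
    (hΔ : AntitoneOn (Δ_[h] f) (Ici c)) : MonotoneOn f (Ici c) := by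
  intro x hx y _ hxy
  have hlim : Tendsto (fun t => f (t + (y - x)) - f t) atTop (𝓝 0) := by
    simpa only [sub_self, Function.comp_def, id] using
      (hf.comp (tendsto_atTop_add_const_right _ (y - x) tendsto_id)).sub hf
  have hle := le_of_tendsto_of_fwdDiff_nonpos (x := x) hh hlim fun t hxt => by
    have hct : c ≤ t := le_trans hx hxt
    have hshift : t ≤ t + (y - x) := by linarith
    have := hΔ hct (hct.trans hshift) hshift
    simp only [fwdDiff, add_right_comm t h] at this ⊢
    linarith
  simpa only [add_sub_cancel, sub_nonneg] using hle

end FwdDiff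

-- `g` decreases as long as `g' < 0` and increases from then on.
lemma le_of_tendsto_of_deriv_nonneg_persists {g g' : ℝ → ℝ} {c l : ℝ}
    (hderiv : ∀ x, c ≤ x → HasDerivAt g (g' x) x)
    (hpersist : ∀ x y, c ≤ x → x ≤ y → 0 ≤ g' x → 0 ≤ g' y)
    (hc : g c ≤ l) (hlim : Tendsto g atTop (nhds l)) {x : ℝ} (hx : c ≤ x) : g x ≤ l := by
  by_cases hsign : 0 ≤ g' x
  · have hmono : MonotoneOn g (Ici x) :=
      monotoneOn_of_hasDerivWithinAt_nonneg (convex_Ici x)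
        (fun y hy => (hderiv y (hx.trans hy)).continuousAt.continuousWithinAt)
        (fun y hy => (hderiv y (hx.trans (interior_subset hy))).hasDerivWithinAt)
        fun y hy => hpersist x y hx (interior_subset hy) hsign
    refine ge_of_tendsto hlim ?_
    filter_upwards [eventually_ge_atTop x] with y hy using hmono self_mem_Ici hy hy
  · have hanti : AntitoneOn g (Icc c x) :=
      antitoneOn_of_hasDerivWithinAt_nonpos (convex_Icc c x)
        (fun y hy => (hderiv y hy.1).continuousAt.continuousWithinAt)
        (fun y hy => (hderiv y (interior_subset hy).1).hasDerivWithinAt)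
        fun y hy => by
          have hy := interior_subset hy
          by_contra! hpos
          exact hsign (hpersist y x hy.1 hy.2 hpos.le)
    exact (hanti (left_mem_Icc.2 hx) (right_mem_Icc.2 hx) hx).trans hc

lemma log_sub_log_lt_trapezoid {x y : ℝ} (hy : 0 < y) (hyx : y < x) :
    log x - log y < (x - y) * (1 / x + 1 / y) / 2 := by
  have hx : 0 < x := hy.trans hyx
  have hsinh : log (x / y) < sinh (log (x / y)) :=
    self_lt_sinh_iff.2 (log_pos ((one_lt_div hy).2 hyx))
  rw [sinh_log (div_pos hx hy), log_div hx.ne' hy.ne'] at hsinh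
  refine hsinh.trans_eq ?_
  field_simp
  ring

section Quad

open scoped Topology fwdDiff

/-- The quadratic `v(x) = x² + x + 1/3`, for which `½ log v(x)` is the common leading part of
`ψ(x + 1)` and of every `L x a`. -/
noncomputable def quad (x : ℝ) : ℝ := x ^ 2 + x + 1 / 3

lemma one_third_le_quad {x : ℝ} (hx : 0 ≤ x) : 1 / 3 ≤ quad x := by
  unfold quad
  nlinarith

lemma quad_pos (x : ℝ) : 0 < quad x := by
  unfold quad
  nlinarith [sq_nonneg (x + 1 / 2)]

lemma hasDerivAt_quad (x : ℝ) : HasDerivAt quad (2 * x + 1) x :=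
  (((hasDerivAt_pow 2 x).add (hasDerivAt_id x)).add_const (1 / 3)).congr_deriv (by simp)

lemma tendsto_log_quad_add_sub_two_mul_log (c : ℝ) :
    Tendsto (fun x => log (quad x + c) - 2 * log x) atTop (𝓝 0) := by
  have hratio : Tendsto (fun x : ℝ => 1 + x⁻¹ + (1 / 3 + c) * x⁻¹ ^ 2) atTop (𝓝 1) := by
    simpa using (tendsto_inv_atTop_zero.const_add (1 : ℝ)).add
      ((tendsto_inv_atTop_zero.pow 2).const_mul (1 / 3 + c))
  have hlog := hratio.log one_ne_zero
  rw [log_one] at hlog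
  refine hlog.congr' ?_
  filter_upwards [hratio.eventually_ne one_ne_zero, eventually_gt_atTop 0] with x hne hx
  have hfactor : quad x + c = (1 + x⁻¹ + (1 / 3 + c) * x⁻¹ ^ 2) * x ^ 2 := by
    unfold quad
    field_simp
    ring
  rw [hfactor, log_mul hne (by positivity), log_pow, Nat.cast_ofNat, add_sub_cancel_right]

/-- The difference of `ψ(x + 1)` and its approximation `½ log v(x)`. -/
noncomputable def digammaRemainder (x : ℝ) : ℝ := digamma (x + 1) - log (quad x) / 2

lemma tendsto_digammaRemainder : Tendsto digammaRemainder atTop (𝓝 0) := by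
  have h := tendsto_digamma_add_one_sub_log.sub
    ((tendsto_log_quad_add_sub_two_mul_log 0).div_const 2)
  simp only [add_zero, zero_div, sub_zero] at h
  refine h.congr fun x => ?_
  unfold digammaRemainder
  ring

lemma fwdDiff_digammaRemainder {x : ℝ} (hx : 0 ≤ x) :
    Δ_[1] digammaRemainder x = 1 / (x + 1) - log (quad (x + 1)) / 2 + log (quad x) / 2 := by
  rw [fwdDiff, digammaRemainder, digammaRemainder, digamma_add_one (by positivity)]
  ring

lemma antitoneOn_fwdDiff_digammaRemainder : AntitoneOn (Δ_[1] digammaRemainder) (Ici 0) := by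
  have hderiv (x : ℝ) (hx : 0 ≤ x) : HasDerivAt
      (fun x => 1 / (x + 1) - log (quad (x + 1)) / 2 + log (quad x) / 2)
      (-(1 / 9) / ((x + 1) ^ 2 * quad (x + 1) * quad x)) x := by
    have hv := (quad_pos x).ne'
    have hw := (quad_pos (x + 1)).ne'
    have hinv := ((hasDerivAt_id x).add_const 1).fun_inv (by positivity)
    have hlogw := ((hasDerivAt_quad (x + 1)).log hw).comp_add_const x 1
    have hlogv := (hasDerivAt_quad x).log hv
    simp only [one_div]
    refine ((hinv.sub (hlogw.div_const 2)).add (hlogv.div_const 2)).congr_deriv ?_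
    have hx1 : x + 1 ≠ 0 := by positivity
    simp only [id]
    field_simp
    unfold quad
    ring
  refine AntitoneOn.congr ?_ fun x hx => (fwdDiff_digammaRemainder hx).symm
  refine antitoneOn_of_hasDerivWithinAt_nonpos (convex_Ici 0)
    (fun x hx => (hderiv x hx).continuousAt.continuousWithinAt)
    (fun x hx => (hderiv x (interior_subset hx)).hasDerivWithinAt) fun x _ => ?_
  have := quad_pos x
  have := quad_pos (x + 1)
  exact div_nonpos_of_nonpos_of_nonneg (by norm_num) (by positivity)

lemma monotoneOn_digammaRemainder : MonotoneOn digammaRemainder (Ici 0) :=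
  monotoneOn_of_tendsto_of_antitoneOn_fwdDiff one_pos tendsto_digammaRemainder
    antitoneOn_fwdDiff_digammaRemainder

lemma digammaRemainder_nonpos {x : ℝ} (hx : 0 ≤ x) : digammaRemainder x ≤ 0 := by
  refine ge_of_tendsto tendsto_digammaRemainder ?_
  filter_upwards [eventually_ge_atTop x] with y hy
  exact monotoneOn_digammaRemainder hx (hx.trans hy) hy

end Quad

section L

open scoped Topology

variable {x a : ℝ}

lemma L_eq (ha : a ≠ 0) : L x a =
    (log (quad x + a) + 45 * a ^ 2 * log (quad x - 1 / (45 * a))) / (90 * a ^ 2 + 2) := by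
  have hA : x ^ 2 + x + (3 * a + 1) / 3 = quad x + a := by
    unfold quad
    ring
  have hB : x ^ 2 + x + (15 * a - 1) / (45 * a) = quad x - 1 / (45 * a) := by
    unfold quad
    field_simp
    ring
  rw [L, hA, hB]
  ring

lemma quad_sub_pos (hx : 0 ≤ x) (ha : 1 / 15 < a) : 0 < quad x - 1 / (45 * a) := by
  have : 1 / (45 * a) < 1 / 3 := one_div_lt_one_div_of_lt (by norm_num) (by linarith)
  linarith [one_third_le_quad hx]

lemma tendsto_L_sub_log (ha : a ≠ 0) : Tendsto (fun x => L x a - log x) atTop (𝓝 0) := by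
  have h := ((tendsto_log_quad_add_sub_two_mul_log a).add
    ((tendsto_log_quad_add_sub_two_mul_log (-(1 / (45 * a)))).const_mul (45 * a ^ 2))).div_const
      (90 * a ^ 2 + 2)
  simp only [mul_zero, add_zero, zero_div, ← sub_eq_add_neg] at h
  refine h.congr fun x => ?_
  rw [L_eq ha]
  field_simp
  ring

lemma exists_hasDerivAt_L_param_pos (hx : 0 ≤ x) (ha : 1 / 15 < a) :
    ∃ d, 0 < d ∧ HasDerivAt (L x) d a := by
  have ha0 : 0 < a := by linarith
  set A := quad x + a with hA
  set B := quad x - 1 / (45 * a) with hB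
  have hB0 : 0 < B := quad_sub_pos hx ha
  have hAB : A - B = (90 * a ^ 2 + 2) / (90 * a) := by
    rw [hA, hB]
    field_simp
    ring
  have hBA : B < A := sub_pos.1 (hAB ▸ by positivity)
  have hA0 : 0 < A := hB0.trans hBA
  refine ⟨180 * a / (90 * a ^ 2 + 2) ^ 2 * ((A - B) * (1 / A + 1 / B) / 2 - (log A - log B)),
    mul_pos (by positivity) (sub_pos.2 (log_sub_log_lt_trapezoid hB0 hBA)), ?_⟩
  have hsq := hasDerivAt_pow 2 a
  have hlogA : HasDerivAt (fun t => log (quad x + t)) (1 / A) a :=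
    ((hasDerivAt_id a).const_add (quad x)).log hA0.ne'
  have hlogB : HasDerivAt (fun t => log (quad x - 1 / (45 * t))) (1 / (45 * a ^ 2) / B) a := by
    simp only [one_div]
    refine ((((hasDerivAt_id a).const_mul 45).fun_inv (by simpa using ha0.ne')).const_sub
      (quad x)).log (by simpa only [id, hB, one_div] using hB0.ne') |>.congr_deriv ?_
    simp only [id, hB]
    field_simp
  have hL := (hlogA.fun_add ((hsq.const_mul 45).fun_mul hlogB)).fun_div
    ((hsq.const_mul 90).add_const 2) (by positivity)
  refine (hL.congr_deriv ?_).congr_of_eventuallyEq ?_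
  · rw [← hA, ← hB, hAB]
    field_simp
    ring
  · filter_upwards [eventually_ne_nhds ha0.ne'] with t ht using L_eq ht

lemma continuousOn_L_param (hx : 0 ≤ x) : ContinuousOn (L x) (Ioi (1 / 15)) := fun _ ha =>
  let ⟨_, _, h⟩ := exists_hasDerivAt_L_param_pos hx ha
  h.continuousAt.continuousWithinAt

lemma strictMonoOn_L_param (hx : 0 ≤ x) : StrictMonoOn (L x) (Ioi (1 / 15)) := by
  refine strictMonoOn_of_deriv_pos (convex_Ioi _) (continuousOn_L_param hx) fun a ha => ?_
  obtain ⟨d, hd, h⟩ := exists_hasDerivAt_L_param_pos hx (interior_subset ha)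
  exact h.deriv.symm ▸ hd

/-- The sum `s = a - 1 / (45 a)` of the two offsets of `v(x)` in `L x a`. Their product is
`-1/45`, so `∂L/∂x` depends on `a` through `s` only. -/
noncomputable def offsetSum (a : ℝ) : ℝ := a - 1 / (45 * a)

/-- The product of the arguments `v + a` and `v - 1 / (45 a)` of the two logarithms in `L x a`,
as a polynomial in `v = v(x)` and the offset sum `s`. -/
noncomputable def offsetProd (s x : ℝ) : ℝ := quad x ^ 2 + s * quad x - 1 / 45

/-- The derivative of `x ↦ L x a`, as a function of the offset sum `s` of `a`. -/
noncomputable def LDeriv (s x : ℝ) : ℝ := (x + 1 / 2) * (quad x + s) / offsetProd s x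

lemma offsetSum_le_offsetSum {b : ℝ} (ha : 0 < a) (hab : a ≤ b) : offsetSum a ≤ offsetSum b := by
  unfold offsetSum
  gcongr

lemma offsetProd_offsetSum (ha : a ≠ 0) :
    offsetProd (offsetSum a) x = (quad x + a) * (quad x - 1 / (45 * a)) := by
  unfold offsetProd offsetSum
  field_simp
  ring

lemma offsetProd_offsetSum_pos (hx : 0 ≤ x) (ha : 1 / 15 < a) :
    0 < offsetProd (offsetSum a) x := by
  rw [offsetProd_offsetSum (by linarith)]
  exact mul_pos (by linarith [quad_pos x]) (quad_sub_pos hx ha)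

lemma hasDerivAt_L (hx : 0 ≤ x) (ha : 1 / 15 < a) :
    HasDerivAt (fun x => L x a) (LDeriv (offsetSum a) x) x := by
  have ha0 : a ≠ 0 := by linarith
  have hA : quad x + a ≠ 0 := by linarith [quad_pos x]
  have hB := (quad_sub_pos hx ha).ne'
  have hL := ((((hasDerivAt_quad x).add_const a).log hA).add
    ((((hasDerivAt_quad x).sub_const (1 / (45 * a))).log hB).const_mul (45 * a ^ 2))).div_const
      (90 * a ^ 2 + 2)
  refine (hL.congr_deriv ?_).congr_of_eventuallyEq (.of_forall fun y => L_eq ha0)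
  rw [LDeriv, offsetProd_offsetSum ha0, offsetSum]
  generalize hw : quad x - 1 / (45 * a) = w at hB ⊢
  field_simp at hw ⊢
  linear_combination (-2) * hw

end L

section DigammaGap

open scoped Topology fwdDiff

variable {x a : ℝ}

/-- The difference `ψ(x + 1) - L x a`, whose sign is in question. -/
noncomputable def digammaGap (a x : ℝ) : ℝ := digamma (x + 1) - L x a

lemma tendsto_digammaGap (ha : a ≠ 0) : Tendsto (digammaGap a) atTop (𝓝 0) := by
  have h := tendsto_digamma_add_one_sub_log.sub (tendsto_L_sub_log ha)
  simp only [sub_sub_sub_cancel_right, sub_zero] at h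
  exact h

lemma continuousAt_digammaGap (hx : 0 ≤ x) (ha : 1 / 15 < a) :
    ContinuousAt (digammaGap a) x :=
  (ContinuousAt.comp (f := fun x : ℝ => x + 1) (continuousAt_digamma (by positivity))
    (by fun_prop)).sub (hasDerivAt_L hx ha).continuousAt

lemma fwdDiff_digammaGap (hx : 0 ≤ x) :
    Δ_[1] (digammaGap a) x = 1 / (x + 1) - L (x + 1) a + L x a := by
  rw [fwdDiff, digammaGap, digammaGap, digamma_add_one (by positivity)]
  ring

/-- The derivative of the first difference of `digammaGap a`, in terms of the offset sum `s`
of `a`. -/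
noncomputable def gapDiffDeriv (s x : ℝ) : ℝ :=
  ((16 / 135 - 7 / 45 * s) * (x + 1) ^ 2 - (s / 3 + 4 / 45) ^ 2) /
    ((x + 1) ^ 2 * offsetProd s (x + 1) * offsetProd s x)

lemma hasDerivAt_fwdDiff_digammaGap (hx : 0 ≤ x) (ha : 1 / 15 < a) :
    HasDerivAt (fun x => 1 / (x + 1) - L (x + 1) a + L x a) (gapDiffDeriv (offsetSum a) x) x := by
  have hx1 : 0 < x + 1 := by positivity
  have hv := (offsetProd_offsetSum_pos hx ha).ne'
  have hw := (offsetProd_offsetSum_pos hx1.le ha).ne'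
  have hinv := ((hasDerivAt_id x).add_const 1).fun_inv hx1.ne'
  simp only [one_div]
  refine ((hinv.sub ((hasDerivAt_L hx1.le ha).comp_add_const x 1)).add
    (hasDerivAt_L hx ha)).congr_deriv ?_
  simp only [id, LDeriv, gapDiffDeriv]
  field_simp
  unfold offsetProd quad
  ring

lemma gapDiffDeriv_nonneg_of_le {y : ℝ} (hx : 0 ≤ x) (ha : 1 / 15 < a) (hxy : x ≤ y)
    (h : 0 ≤ gapDiffDeriv (offsetSum a) x) : 0 ≤ gapDiffDeriv (offsetSum a) y := by
  have hden (z : ℝ) (hz : 0 ≤ z) :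
      0 < (z + 1) ^ 2 * offsetProd (offsetSum a) (z + 1) * offsetProd (offsetSum a) z :=
    mul_pos (mul_pos (by positivity) (offsetProd_offsetSum_pos (by positivity) ha))
      (offsetProd_offsetSum_pos hz ha)
  have hy : 0 ≤ y := hx.trans hxy
  rw [gapDiffDeriv, le_div_iff₀ (hden x hx), zero_mul] at h
  refine div_nonneg ?_ (hden y hy).le
  have hcoef : 0 ≤ 16 / 135 - 7 / 45 * offsetSum a :=
    nonneg_of_mul_nonneg_left (by linarith [sq_nonneg (offsetSum a / 3 + 4 / 45)])
      (by positivity : 0 < (x + 1) ^ 2)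
  have hsq : (x + 1) ^ 2 ≤ (y + 1) ^ 2 := by gcongr
  linarith [mul_le_mul_of_nonneg_left hsq hcoef]

lemma digammaGap_nonneg_of_fwdDiff_nonpos {c : ℝ} (hc : 0 ≤ c) (ha : 1 / 15 < a)
    (hΔ : Δ_[1] (digammaGap a) c ≤ 0) (hx : c ≤ x) : 0 ≤ digammaGap a x := by
  have ha0 : a ≠ 0 := by linarith
  have hlim : Tendsto (fun x => 1 / (x + 1) - L (x + 1) a + L x a) atTop (𝓝 0) := by
    have h := ((tendsto_digammaGap ha0).comp
      (tendsto_atTop_add_const_right _ 1 tendsto_id)).sub (tendsto_digammaGap ha0)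
    rw [sub_zero] at h
    refine h.congr' ?_
    filter_upwards [eventually_ge_atTop 0] with y hy using fwdDiff_digammaGap hy
  refine le_of_tendsto_of_fwdDiff_nonpos one_pos (tendsto_digammaGap ha0) fun y hy => ?_
  rw [fwdDiff_digammaGap hc] at hΔ
  rw [fwdDiff_digammaGap (by linarith)]
  exact le_of_tendsto_of_deriv_nonneg_persists
    (fun z hz => hasDerivAt_fwdDiff_digammaGap (hc.trans hz) ha)
    (fun z t hz hzt => gapDiffDeriv_nonneg_of_le (hc.trans hz) ha hzt) hΔ hlim (hx.trans hy)

lemma LDeriv_le_LDeriv {s t : ℝ} (hx : 0 ≤ x) (hs : 0 < offsetProd s x) (hst : s ≤ t) :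
    LDeriv t x ≤ LDeriv s x := by
  have hv := quad_pos x
  have ht : 0 < offsetProd t x := hs.trans_le (by unfold offsetProd; gcongr)
  rw [LDeriv, LDeriv, mul_div_assoc, mul_div_assoc]
  refine mul_le_mul_of_nonneg_left ?_ (by positivity)
  rw [div_le_div_iff₀ ht hs]
  unfold offsetProd
  linarith

lemma LDeriv_offsetSum_half_lt (hx : x ∈ Icc 0 (1 / 12 : ℝ)) :
    LDeriv (offsetSum (1 / 2)) x <
      (2 * (x + 2) + 1) / quad (x + 2) / 2 + 1 / (x + 1) ^ 2 + 1 / (x + 2) ^ 2 := by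
  obtain ⟨hx0, hx1⟩ := hx
  have hs : offsetSum (1 / 2) = 41 / 90 := by norm_num [offsetSum]
  have hprod : offsetProd (41 / 90) x = (x ^ 2 + x + 5 / 6) * (x ^ 2 + x + 13 / 45) := by
    unfold offsetProd quad
    ring
  have hw := quad_pos (x + 2)
  rw [hs, ← sub_pos]
  have hnum : (2 * (x + 2) + 1) / quad (x + 2) / 2 + 1 / (x + 1) ^ 2 + 1 / (x + 2) ^ 2
      - LDeriv (41 / 90) x =
      (31 / 810 - 11 / 27 * x + 13 / 810 * x ^ 2 - 4 / 45 * x ^ 3 - 1 / 90 * x ^ 4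
          - 1 / 45 * x ^ 5) / (quad (x + 2) * (x + 1) ^ 2 * (x + 2) ^ 2 *
          ((x ^ 2 + x + 5 / 6) * (x ^ 2 + x + 13 / 45))) := by
    rw [LDeriv, hprod]
    field_simp
    unfold quad
    ring
  rw [hnum]
  refine div_pos ?_ (by positivity)
  have h3 : x ^ 3 ≤ (1 / 12) ^ 3 := by gcongr
  have h4 : x ^ 4 ≤ (1 / 12) ^ 4 := by gcongr
  have h5 : x ^ 5 ≤ (1 / 12) ^ 5 := by gcongr
  linarith [sq_nonneg x]

/-- The analogue of `digammaGap a` with `ψ(x + 3)` replaced by `½ log v(x + 2)` after two steps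
of the functional equation of `ψ`. -/
noncomputable def approxGap (a x : ℝ) : ℝ :=
  log (quad (x + 2)) / 2 - 1 / (x + 1) - 1 / (x + 2) - L x a

lemma digammaGap_eq_digammaRemainder_add_approxGap (hx : 0 ≤ x) :
    digammaGap a x = digammaRemainder (x + 2) + approxGap a x := by
  rw [digammaGap, digammaRemainder, approxGap, show x + 2 + 1 = x + 3 by ring,
    digamma_add_three (by linarith)]
  ring

lemma hasDerivAt_approxGap (hx : 0 ≤ x) (ha : 1 / 15 < a) :
    HasDerivAt (approxGap a) ((2 * (x + 2) + 1) / quad (x + 2) / 2 + 1 / (x + 1) ^ 2 +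
      1 / (x + 2) ^ 2 - LDeriv (offsetSum a) x) x := by
  have hlog := ((hasDerivAt_quad (x + 2)).log (quad_pos _).ne').comp_add_const x 2
  have hinv (c : ℝ) (hc : 0 < c) := ((hasDerivAt_id x).add_const c).fun_inv
    (show x + c ≠ 0 by positivity)
  unfold approxGap
  simp only [one_div]
  refine ((((hlog.div_const 2).sub (hinv 1 one_pos)).sub (hinv 2 two_pos)).sub
    (hasDerivAt_L hx ha)).congr_deriv ?_
  simp only [id]
  ring

lemma strictMonoOn_approxGap (ha : 1 / 2 ≤ a) : StrictMonoOn (approxGap a) (Icc 0 (1 / 12)) := by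
  have ha' : 1 / 15 < a := by linarith
  refine strictMonoOn_of_hasDerivWithinAt_pos (convex_Icc _ _)
    (fun x hx => (hasDerivAt_approxGap hx.1 ha').continuousAt.continuousWithinAt)
    (fun x hx => (hasDerivAt_approxGap (interior_subset hx).1 ha').hasDerivWithinAt)
    fun x hx => sub_pos.2 ?_
  have hx := interior_subset hx
  calc
    LDeriv (offsetSum a) x ≤ LDeriv (offsetSum (1 / 2)) x :=
      LDeriv_le_LDeriv hx.1 (offsetProd_offsetSum_pos hx.1 (by norm_num))
        (offsetSum_le_offsetSum (by norm_num) ha)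
    _ < _ := LDeriv_offsetSum_half_lt hx

lemma strictMonoOn_digammaGap (ha : 1 / 2 ≤ a) :
    StrictMonoOn (digammaGap a) (Icc 0 (1 / 12)) := by
  intro x hx y hy hxy
  rw [digammaGap_eq_digammaRemainder_add_approxGap hx.1,
    digammaGap_eq_digammaRemainder_add_approxGap hy.1]
  exact add_lt_add_of_le_of_lt
    (monotoneOn_digammaRemainder (by linarith [hx.1] : (0 : ℝ) ≤ x + 2)
      (by linarith [hy.1] : (0 : ℝ) ≤ y + 2) (by linarith)) (strictMonoOn_approxGap ha hx hy hxy)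

end DigammaGap

section Numerics

open scoped fwdDiff

variable {x : ℝ}

lemma log_fiveSmooth (i j k : ℤ) :
    log (2 ^ i * 3 ^ j * 5 ^ k) = i * log 2 + j * log 3 + k * log 5 := by
  rw [log_mul (by positivity) (by positivity), log_mul (by positivity) (by positivity),
    log_zpow, log_zpow, log_zpow]

lemma log_le_fiveSmooth (i j k : ℤ) (hx : 0 < x) :
    log x ≤ i * log 2 + j * log 3 + k * log 5 + (x / (2 ^ i * 3 ^ j * 5 ^ k) - 1) := by
  have h := log_le_sub_one_of_pos (div_pos hx (by positivity : (0 : ℝ) < 2 ^ i * 3 ^ j * 5 ^ k))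
  rw [log_div hx.ne' (by positivity), log_fiveSmooth] at h
  linarith

lemma fiveSmooth_le_log (i j k : ℤ) (hx : 0 < x) :
    i * log 2 + j * log 3 + k * log 5 + (1 - 2 ^ i * 3 ^ j * 5 ^ k / x) ≤ log x := by
  have h := log_le_sub_one_of_pos (div_pos (by positivity : (0 : ℝ) < 2 ^ i * 3 ^ j * 5 ^ k) hx)
  rw [log_div (by positivity) hx.ne', log_fiveSmooth] at h
  linarith

lemma L_eight_fifteenths (x : ℝ) :
    L x (8 / 15) = (5 * log (x ^ 2 + x + 13 / 15) + 64 * log (x ^ 2 + x + 7 / 24)) / 138 := by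
  unfold L
  norm_num
  ring

lemma L_zero_half : L 0 (1 / 2) = (4 * log (5 / 6) + 45 * log (13 / 45)) / 98 := by
  unfold L
  norm_num
  ring

lemma fwdDiff_digammaGap_nonpos : Δ_[1] (digammaGap (8 / 15)) (1 / 12) ≤ 0 := by
  have hA : log ((1 / 12 + 1) ^ 2 + (1 / 12 + 1) + 13 / 15) -
      log ((1 / 12) ^ 2 + 1 / 12 + 13 / 15) = log (173 / 53) := by
    rw [← log_div (by norm_num) (by norm_num)]
    norm_num
  have hB : log ((1 / 12 + 1) ^ 2 + (1 / 12 + 1) + 7 / 24) -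
      log ((1 / 12) ^ 2 + 1 / 12 + 7 / 24) = log (367 / 55) := by
    rw [← log_div (by norm_num) (by norm_num)]
    norm_num
  have hA' := fiveSmooth_le_log (-6) (-1) 4 (x := 173 / 53) (by norm_num)
  have hB' := fiveSmooth_le_log 2 (-1) 1 (x := 367 / 55) (by norm_num)
  rw [fwdDiff_digammaGap (by norm_num), L_eight_fifteenths, L_eight_fifteenths]
  norm_num at hA' hB'
  linarith [log_two_gt_d9, log_three_gt_d9, log_five_gt_d9, log_two_lt_d9, log_three_lt_d9,
    log_five_lt_d9]

lemma digammaGap_eight_fifteenths_nonneg (hx : 1 / 12 ≤ x) : 0 ≤ digammaGap (8 / 15) x :=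
  digammaGap_nonneg_of_fwdDiff_nonpos (by norm_num) (by norm_num) fwdDiff_digammaGap_nonpos hx

lemma L_zero_half_lt : L 0 (1 / 2) < -eulerMascheroniConstant := by
  have hgap := digammaGap_eight_fifteenths_nonneg (x := 1) (by norm_num)
  rw [digammaGap, digamma_add_one one_pos, digamma_one, L_eight_fifteenths] at hgap
  have h5 := log_le_fiveSmooth (-1) (-1) 1 (x := 5 / 6) (by norm_num)
  have h13 := log_le_fiveSmooth 2 2 (-3) (x := 13 / 45) (by norm_num)
  have h43 := fiveSmooth_le_log 3 2 (-2) (x := 43 / 15) (by norm_num)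
  have h55 := fiveSmooth_le_log (-2) 2 0 (x := 55 / 24) (by norm_num)
  rw [L_zero_half]
  norm_num at hgap h5 h13 h43 h55
  linarith [log_two_gt_d9, log_three_gt_d9, log_five_gt_d9, log_two_lt_d9, log_three_lt_d9,
    log_five_lt_d9]

lemma lt_L_zero_eight_fifteenths : -eulerMascheroniConstant < L 0 (8 / 15) := by
  have hrem := digammaRemainder_nonpos (x := 2) (by norm_num)
  rw [digammaRemainder, digamma_add_one two_pos, ← one_add_one_eq_two, digamma_add_one one_pos,
    digamma_one] at hrem
  rw [L_eight_fifteenths]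
  unfold quad at hrem
  have h19 := log_le_fiveSmooth 5 0 (-1) (x := 19 / 3) (by norm_num)
  have h13 := fiveSmooth_le_log 2 3 (-3) (x := 13 / 15) (by norm_num)
  have h7 := fiveSmooth_le_log (-8) 1 2 (x := 7 / 24) (by norm_num)
  norm_num at hrem h19 h13 h7 ⊢
  linarith [log_two_gt_d9, log_three_gt_d9, log_five_gt_d9, log_two_lt_d9, log_three_lt_d9,
    log_five_lt_d9]

end Numerics

section Threshold

open scoped Topology

variable {a a₀ x : ℝ}

lemma digammaGap_zero : digammaGap a 0 = -eulerMascheroniConstant - L 0 a := by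
  rw [digammaGap, zero_add, digamma_one]

lemma exists_L_zero_eq_neg_eulerMascheroniConstant :
    ∃ a₀ ∈ Ioo (1 / 2 : ℝ) (8 / 15), L 0 a₀ = -eulerMascheroniConstant :=
  intermediate_value_Ioo (by norm_num)
    ((continuousOn_L_param le_rfl).mono fun a ha => by
      rw [mem_Ioi]
      linarith [ha.1])
    ⟨L_zero_half_lt, lt_L_zero_eight_fifteenths⟩

lemma L_lt_digamma_of_mem_Ioo (ha₀ : a₀ ∈ Ioo (1 / 2 : ℝ) (8 / 15))
    (hroot : L 0 a₀ = -eulerMascheroniConstant) (hx : 0 < x) : L x a₀ < digamma (x + 1) := by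
  rcases le_total x (1 / 12) with hx' | hx'
  · have hgap := strictMonoOn_digammaGap ha₀.1.le (left_mem_Icc.2 (by norm_num)) ⟨hx.le, hx'⟩ hx
    rwa [digammaGap_zero, hroot, sub_self, digammaGap, sub_pos] at hgap
  · calc
      L x a₀ < L x (8 / 15) := strictMonoOn_L_param hx.le
        (mem_Ioi.2 (by linarith [ha₀.1])) (mem_Ioi.2 (by norm_num)) ha₀.2
      _ ≤ digamma (x + 1) := sub_nonneg.1 (digammaGap_eight_fifteenths_nonneg hx')

lemma L_zero_le_of_forall_L_lt_digamma (ha : 1 / 15 < a)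
    (h : ∀ x, 0 < x → L x a < digamma (x + 1)) : L 0 a ≤ -eulerMascheroniConstant := by
  rw [← sub_nonneg, ← digammaGap_zero]
  refine ge_of_tendsto ((continuousAt_digammaGap le_rfl ha).tendsto.mono_left
    (nhdsWithin_le_nhds (s := Ioi 0))) ?_
  filter_upwards [self_mem_nhdsWithin] with x hx using (sub_pos.2 (h x hx)).le

end Threshold

/-- The equation −γ = L(0,a) has a unique root a₀ in (1/15, ∞), with a₀ ∈ (1/2, 3/5);
and for a > 1/15, ψ(x+1) > L(x,a) holds for all x > 0 iff a ∈ (1/15, a₀]. -/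
theorem stmt_14 :
    ∃ a₀ : ℝ, a₀ ∈ Set.Ioo (1 / 2 : ℝ) (3 / 5) ∧
      (∀ a ∈ Set.Ioi (1 / 15 : ℝ), (-Real.eulerMascheroniConstant = L 0 a ↔ a = a₀)) ∧
      (∀ a : ℝ, 1 / 15 < a →
        ((∀ x : ℝ, 0 < x → digamma (x + 1) > L x a) ↔ a ∈ Set.Ioc (1 / 15 : ℝ) a₀)) := by
  obtain ⟨a₀, ha₀, hroot⟩ := exists_L_zero_eq_neg_eulerMascheroniConstant
  have ha₀' : a₀ ∈ Ioi (1 / 15 : ℝ) := mem_Ioi.2 (by linarith [ha₀.1])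
  refine ⟨a₀, ⟨ha₀.1, by linarith [ha₀.2]⟩, fun a ha => ?_, fun a ha => ⟨fun h => ⟨ha, ?_⟩, ?_⟩⟩
  · rw [← hroot, eq_comm, (strictMonoOn_L_param le_rfl).eq_iff_eq ha ha₀']
  · rw [← (strictMonoOn_L_param le_rfl).le_iff_le ha ha₀', hroot]
    exact L_zero_le_of_forall_L_lt_digamma ha h
  · rintro ⟨-, hle⟩ x hx
    exact ((strictMonoOn_L_param hx.le).monotoneOn ha ha₀' hle).trans_lt
      (L_lt_digamma_of_mem_Ioo ha₀ hroot hx)
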